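/- Let D be a real K×q matrix and A a q×q real diagonal matrix. For each i = 1,…,q let r_i ∈ ℝ^d be a vector with nonnegative entries, and for w ∈ {0,1}^d define B(w) as the q×q diagonal matrix with (i,i) entry b_i(w) = max(1 − ⟨w, r_i⟩, 0) and define S(w) = D A B(w). Let W ⊆ {0,1}^d be a nonempty finite feasible set. Then the minimum over w ∈ W of Tr(S(w)^T S(w)) equals the minimum over pairs (w, s) with w ∈ W, s ∈ ℝ^q, s_i ≥ 0 and s_i ≥ 1 − ⟨w, r_i⟩ for all i, of the sum over i of c_i^2 · s_i^2, where c_i = d_i · a_i, d_i is the Euclidean norm of the i-th column of D, and a_i is the i-th diagonal entry of A. Moreover w* ∈ W attains the first minimum if and only if there exists s* such that (w*, s*) attains the second minimum. -/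

import Mathlib

/-!
Fix `w` and write `b i = max (1 - ⟨w, r i⟩) 0`. The `i`-th column of `D A B(w)` is `a i * b i` times
the `i`-th column of `D`, so `Tr(S(w)ᵀ S(w))`, the sum of the squared column norms, equals
`∑ i, c i ^ 2 * b i ^ 2` (`trace_eq_sum_sq`). On the other hand `b` is the componentwise least
feasible slack vector for `w`, and the slack objective is monotone on nonnegative vectors, so `b`
minimizes it for fixed `w`. Both problems thus have the same value for each fixed `w`, and comparing
minimizers over the finite set `W` gives both claims.
-/

open Matrix

/-- The squared Frobenius norm of `D * diagonal a * diagonal b` is the sum over the columns of `D`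
of the squared Euclidean norms, weighted by `(a i * b i) ^ 2`. -/
theorem trace_eq_sum_sq {K q : ℕ} (D : Matrix (Fin K) (Fin q) ℝ) (a b : Fin q → ℝ) :
    Matrix.trace ((D * Matrix.diagonal a * Matrix.diagonal b)ᵀ *
        (D * Matrix.diagonal a * Matrix.diagonal b)) =
      ∑ i, (‖(EuclideanSpace.equiv (Fin K) ℝ).symm (fun k => D k i)‖ * a i) ^ 2 * b i ^ 2 := by
  rw [Matrix.trace]
  refine Finset.sum_congr rfl fun i _ => ?_
  rw [Matrix.diag_apply, Matrix.mul_apply (M := (_)ᵀ), mul_pow, EuclideanSpace.norm_sq_eq,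
    Finset.sum_mul, Finset.sum_mul]
  refine Finset.sum_congr rfl fun k _ => ?_
  rw [Matrix.transpose_apply, Matrix.mul_diagonal, Matrix.mul_diagonal]
  simp
  ring

/-- Equivalence of the experimental-design problem `min_{w ∈ W} Tr(S(w)ᵀ S(w))`,
with `S(w) = D A B(w)` and `B(w) = diagonal (fun i => max (1 - ⟨w, r i⟩) 0)`,
and the slack-variable reformulation `min ∑ i, cᵢ² sᵢ²` subject to `sᵢ ≥ 0`,
`sᵢ ≥ 1 - ⟨w, r i⟩`, where `cᵢ = dᵢ aᵢ` and `dᵢ` is the Euclidean norm of the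
`i`-th column of `D`: the two minimum values coincide, and `w⋆ ∈ W` attains the
first minimum iff some `(w⋆, s⋆)` attains the second. -/
theorem stmt_1 (K q d : ℕ) (D : Matrix (Fin K) (Fin q) ℝ) (a : Fin q → ℝ)
    (r : Fin q → Fin d → ℝ) (hr : ∀ i j, 0 ≤ r i j)
    (W : Finset (Fin d → ℝ)) (hW : W.Nonempty)
    (hW01 : ∀ w ∈ W, ∀ j, w j = 0 ∨ w j = 1)
    (f : (Fin d → ℝ) → ℝ)
    (hf : ∀ w, f w = Matrix.trace
      ((D * Matrix.diagonal a *
          Matrix.diagonal (fun i => max (1 - ∑ j, w j * r i j) 0))ᵀ *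
        (D * Matrix.diagonal a *
          Matrix.diagonal (fun i => max (1 - ∑ j, w j * r i j) 0))))
    (c : Fin q → ℝ)
    (hc : ∀ i, c i = ‖(EuclideanSpace.equiv (Fin K) ℝ).symm (fun k => D k i)‖ * a i)
    (g : (Fin d → ℝ) → (Fin q → ℝ) → ℝ)
    (hg : ∀ w s, g w s = ∑ i, c i ^ 2 * s i ^ 2) :
    (sInf {x : ℝ | ∃ w ∈ W, x = f w} =
      sInf {x : ℝ | ∃ w ∈ W, ∃ s : Fin q → ℝ,
        (∀ i, 0 ≤ s i ∧ 1 - ∑ j, w j * r i j ≤ s i) ∧ x = g w s}) ∧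
    ∀ wstar ∈ W,
      ((∀ w ∈ W, f wstar ≤ f w) ↔
        ∃ sstar : Fin q → ℝ,
          (∀ i, 0 ≤ sstar i ∧ 1 - ∑ j, wstar j * r i j ≤ sstar i) ∧
          ∀ w ∈ W, ∀ s : Fin q → ℝ,
            (∀ i, 0 ≤ s i ∧ 1 - ∑ j, w j * r i j ≤ s i) →
            g wstar sstar ≤ g w s) := by
  set b : (Fin d → ℝ) → Fin q → ℝ := fun w i => max (1 - ∑ j, w j * r i j) 0 with hb
  have hfg : ∀ w, f w = g w (b w) := by
    intro w
    rw [hf, hg, trace_eq_sum_sq D a (b w)]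
    simp only [hc]
  have hbf : ∀ w i, 0 ≤ b w i ∧ 1 - ∑ j, w j * r i j ≤ b w i :=
    fun w i => ⟨le_max_right _ _, le_max_left _ _⟩
  have hmin : ∀ w s, (∀ i, 0 ≤ s i ∧ 1 - ∑ j, w j * r i j ≤ s i) → f w ≤ g w s := by
    intro w s hs
    rw [hfg, hg, hg]
    refine Finset.sum_le_sum fun i _ => mul_le_mul_of_nonneg_left ?_ (sq_nonneg _)
    exact pow_le_pow_left₀ (hbf w i).1 (max_le (hs i).2 (hs i).1) 2
  refine ⟨?_, fun v hv => ⟨fun h => ⟨b v, hbf v, fun w hw s hs => ?_⟩, ?_⟩⟩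
  · obtain ⟨v, hv, hvmin⟩ := W.exists_min_image f hW
    -- A minimizer `v` of `f` on `W` makes `f v` the least element of both value sets, so neither
    -- `sInf` takes its junk value.
    have h₁ : IsLeast {x : ℝ | ∃ w ∈ W, x = f w} (f v) := by
      refine ⟨⟨v, hv, rfl⟩, ?_⟩
      rintro x ⟨w, hw, rfl⟩
      exact hvmin w hw
    have h₂ : IsLeast {x : ℝ | ∃ w ∈ W, ∃ s : Fin q → ℝ,
        (∀ i, 0 ≤ s i ∧ 1 - ∑ j, w j * r i j ≤ s i) ∧ x = g w s} (f v) := by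
      refine ⟨⟨v, hv, b v, hbf v, hfg v⟩, ?_⟩
      rintro x ⟨w, hw, s, hs, rfl⟩
      exact (hvmin w hw).trans (hmin w s hs)
    rw [h₁.csInf_eq, h₂.csInf_eq]
  · rw [← hfg]
    exact (h w hw).trans (hmin w s hs)
  · rintro ⟨s, hs, hopt⟩ w hw
    rw [hfg w]
    exact (hmin v s hs).trans (hopt w hw (b w) (hbf w))
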